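/- Let H²_β be the weighted Hardy space induced by a weight sequence w = (w_k)_{k≥1} with w_k → 1, let B(z) = ∏_{j=1}^m (z_j − z)/(1 − conj(z_j)z) be a Blaschke product of order m, and let S(f)(z) = (f(z) − f(0))/z, B̄(z) = conj(B(conj z)). Suppose {f_1, …, f_m} is a basis of the m-dimensional kernel Ker(B̄(S)). Then the sequence {f_j · B^n : 1 ≤ j ≤ m, n = 0, 1, 2, …} is total and finitely linearly independent in H²_β. -/

import Mathlib

noncomputable section

open Complex Filter Topology

/-- The sequence-space (ℓ²) model of a weighted Hardy space `H²_β`.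
An element `a : H2` represents the analytic function whose `k`-th Taylor
coefficient is `a k / β k` (so that `‖a‖` is exactly the `H²_β`-norm). -/
abbrev H2 : Type := lp (fun _ : ℕ => ℂ) 2

/-- The direct sum (ℓ²-sense) of `m` copies of `H2`. -/
abbrev Hm (m : ℕ) : Type := PiLp 2 (fun _ : Fin m => H2)

/-- The open unit disk 𝔻 ⊆ ℂ. -/
def unitDisk : Set ℂ := Metric.ball 0 1

/-- `β_0 = 1` and `β_k = ∏_{j=1}^k w_j`. -/
def betaSeq (w : ℕ → ℝ) (k : ℕ) : ℝ := ∏ j ∈ Finset.Icc 1 k, w j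

/-- The analytic function on 𝔻 represented by the vector `a` in the model of `H²_β`:
`f(z) = ∑_k (a k / β k) z^k`. -/
def repFun (β : ℕ → ℝ) (a : H2) (z : ℂ) : ℂ := ∑' k, (a k / (β k : ℂ)) * z ^ k

/-- `T` is (the ℓ²-model of) the multiplication operator `M_g` on `H²_β`.
Existence of such a `T` says precisely that `M_g` is bounded on `H²_β`. -/
def RepMul (β : ℕ → ℝ) (g : ℂ → ℂ) (T : H2 →L[ℂ] H2) : Prop :=
  ∀ a : H2, ∀ z ∈ unitDisk, repFun β (T a) z = g z * repFun β a z

/-- `T` is (the ℓ²-model of) the composition operator `C_ψ` on `H²_β`.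
Existence of such a `T` says precisely that `C_ψ` is bounded on `H²_β`. -/
def RepComp (β : ℕ → ℝ) (ψ : ℂ → ℂ) (T : H2 →L[ℂ] H2) : Prop :=
  ∀ a : H2, ∀ z ∈ unitDisk, repFun β (T a) z = repFun β a (ψ z)

/-- The Möbius factor `φ_{z₀}(z) = (z₀ - z)/(1 - conj z₀ · z)`. -/
def mobius (z₀ z : ℂ) : ℂ := (z₀ - z) / (1 - (starRingEnd ℂ) z₀ * z)

/-- `φ` belongs to `Aut(𝔻)`, i.e. `φ(z) = e^{iθ}(z₀ - z)/(1 - conj z₀ · z)`. -/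
def IsDiskAut (φ : ℂ → ℂ) : Prop :=
  ∃ (θ : ℝ) (z₀ : ℂ), z₀ ∈ unitDisk ∧
    ∀ z, φ z = Complex.exp (θ * Complex.I) * mobius z₀ z

/-- `B` is a finite Blaschke product of order `m`. -/
def IsBlaschke (m : ℕ) (B : ℂ → ℂ) : Prop :=
  ∃ (θ : ℝ) (zs : Fin m → ℂ), (∀ j, zs j ∈ unitDisk) ∧
    ∀ z, B z = Complex.exp (θ * Complex.I) * ∏ j, mobius (zs j) z

/-- `w` is a positive weight sequence tending to `1` such that the weighted Hardy
space `H²_β` is of polynomial growth: `sup_k (k+1)|w_k - 1| < ∞`. -/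
def PolyGrowth (w : ℕ → ℝ) : Prop :=
  (∀ k, 1 ≤ k → 0 < w k) ∧ Tendsto w atTop (nhds 1) ∧
    ∃ M : ℝ, ∀ k : ℕ, 1 ≤ k → ((k : ℝ) + 1) * |w k - 1| ≤ M

/-- `f` is analytic on an open neighbourhood of the closed unit disk. -/
def AnalyticOnClosedDisk (f : ℂ → ℂ) : Prop :=
  ∃ U : Set ℂ, IsOpen U ∧ Metric.closedBall (0:ℂ) 1 ⊆ U ∧ AnalyticOnNhd ℂ f U

/-- `S` is (the ℓ²-model of) the standard left inverse of `M_z` on `H²_β`,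
`S(f)(z) = (f(z) - f(0))/z`. -/
def RepS (β : ℕ → ℝ) (S : H2 →L[ℂ] H2) : Prop :=
  ∀ a : H2, ∀ z ∈ unitDisk, z ≠ 0 →
    repFun β (S a) z = (repFun β a z - repFun β a 0) / z

/-- The operator `B̄(S)` given by the holomorphic functional calculus for the
Blaschke product with zeros `zs`:  `B̄(S) = ∏_j (conj z_j - S)(1 - z_j S)⁻¹`. -/
def blaschkeBarOp {m : ℕ} (zs : Fin m → ℂ) (S : H2 →L[ℂ] H2) : H2 →L[ℂ] H2 :=
  (List.ofFn fun j : Fin m =>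
    ((starRingEnd ℂ) (zs j) • (1 : H2 →L[ℂ] H2) - S) *
      Ring.inverse ((1 : H2 →L[ℂ] H2) - zs j • S)).prod

/-!
Let `A` be multiplication by `z`. From `S A = 1`, applied factor by factor, `B̄(S)` is a left
inverse of `B(A)`, the multiplication by `B`. Hence the vectors `f_j B^n` are independent, and
writing `x = (x - B(A) B̄(S) x) + B(A) B̄(S) x`, with first summand in `Ker B̄(S)`, shows by
induction that they span `⋃ n, Ker B̄(S)^n`.

This union contains the generalized eigenvectors of `S` at `μ = conj z_1`, and these are dense: the
Taylor coefficients of `z ↦ (1 - z A)⁻¹ 1` at `μ` are generalized eigenvectors of `S`, so by the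
identity theorem their closed span contains the Taylor coefficients at `0`, which are the
monomials.
-/

open ComplexConjugate

lemma commute_ringInverse_right {M₀ : Type*} [MonoidWithZero M₀] {a b : M₀} (h : Commute a b) :
    Commute a (Ring.inverse b) := by
  by_cases hb : IsUnit b
  · obtain ⟨u, rfl⟩ := hb
    rw [Ring.inverse_unit]
    exact h.units_inv_right
  · rw [Ring.inverse_non_unit _ hb]
    exact Commute.zero_right _

section Algebra

variable {R V ι : Type*} [Ring R] [AddCommGroup V] [Module R V] {L T : Module.End R V}

lemma pow_succ_apply_pow_apply_eq_zero (hLT : L * T = 1) {x : V} (hx : L x = 0) (n : ℕ) :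
    (L ^ (n + 1)) ((T ^ n) x) = 0 := by
  rw [pow_succ', Module.End.mul_apply, ← Module.End.mul_apply (L ^ n), pow_mul_pow_eq_one n hLT,
    Module.End.one_apply, hx]

lemma eq_zero_of_sum_pow_apply_eq_zero (hLT : L * T = 1) (N : ℕ) (x : ℕ → V)
    (hx : ∀ n, L (x n) = 0) (hsum : ∑ n ∈ Finset.range N, (T ^ n) (x n) = 0) :
    ∀ n < N, x n = 0 := by
  induction N generalizing x with
  | zero => simp
  | succ N ih =>
    have hLT' (y : V) : L (T y) = y := LinearMap.congr_fun hLT y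
    rw [Finset.sum_range_succ'] at hsum
    have htail : ∀ n < N, x (n + 1) = 0 := by
      refine ih (fun n => x (n + 1)) (fun n => hx _) ?_
      simpa [pow_succ', hLT', hx] using congrArg L hsum
    have hhead : x 0 = 0 := by
      rwa [Finset.sum_eq_zero fun n hn => by rw [htail n (Finset.mem_range.1 hn), map_zero],
        zero_add, pow_zero, Module.End.one_apply] at hsum
    rintro (_ | n) hn
    exacts [hhead, htail n (Nat.lt_of_succ_lt_succ hn)]

lemma linearIndependent_pow_apply_of_mul_eq_one (hLT : L * T = 1) {f : ι → V}
    (hf : ∀ i, L (f i) = 0) (hind : LinearIndependent R f) :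
    LinearIndependent R fun p : ι × ℕ => (T ^ p.2) (f p.1) := by
  classical
  refine linearIndependent_iff''.2 fun s g hg hsum => ?_
  set t : Finset ι := s.image Prod.fst
  set N : ℕ := s.sup Prod.snd + 1
  have hs : s ⊆ t ×ˢ Finset.range N := fun p hp => Finset.mem_product.2
    ⟨Finset.mem_image_of_mem _ hp, Finset.mem_range_succ_iff.2 (Finset.le_sup (f := Prod.snd) hp)⟩
  have hgraded : ∀ n < N, ∑ i ∈ t, g (i, n) • f i = 0 := by
    refine eq_zero_of_sum_pow_apply_eq_zero hLT N _ (fun n => by simp [hf]) ?_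
    rw [Finset.sum_subset hs fun p _ hp => by rw [hg p hp, zero_smul],
      Finset.sum_product_right] at hsum
    simpa only [map_sum, map_smul] using hsum
  intro p
  by_cases hp : p ∈ s
  · obtain ⟨hi, hn⟩ := Finset.mem_product.1 (hs hp)
    exact linearIndependent_iff'.1 hind t _ (hgraded p.2 (Finset.mem_range.1 hn)) p.1 hi
  · exact hg p hp

lemma ker_pow_le_span_pow_apply (hLT : L * T = 1) {f : ι → V}
    (hf : LinearMap.ker L ≤ Submodule.span R (Set.range f)) (n : ℕ) :
    LinearMap.ker (L ^ n) ≤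
      Submodule.span R (Set.range fun p : ι × ℕ => (T ^ p.2) (f p.1)) := by
  set W := Submodule.span R (Set.range fun p : ι × ℕ => (T ^ p.2) (f p.1))
  have hker : LinearMap.ker L ≤ W := by
    refine hf.trans (Submodule.span_le.2 ?_)
    rintro _ ⟨i, rfl⟩
    exact Submodule.subset_span ⟨(i, 0), rfl⟩
  have hT : W ≤ W.comap T := by
    refine Submodule.span_le.2 ?_
    rintro _ ⟨p, rfl⟩
    exact Submodule.subset_span
      ⟨(p.1, p.2 + 1), by simp only [pow_succ', Module.End.mul_apply]⟩
  induction n with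
  | zero => simp only [pow_zero, Module.End.one_eq_id, LinearMap.ker_id, bot_le]
  | succ n ih =>
    intro x hx
    have hTLx : T (L x) ∈ W := hT (ih (by simpa [pow_succ] using hx))
    have hsub : x - T (L x) ∈ LinearMap.ker L := by
      rw [LinearMap.mem_ker, map_sub, ← Module.End.mul_apply L T, hLT, Module.End.one_apply,
        sub_self]
    simpa using W.add_mem (hker hsub) hTLx

end Algebra

section Analytic

variable {𝕜 E : Type*} [NontriviallyNormedField 𝕜] [NormedAddCommGroup E] [NormedSpace 𝕜 E]

lemma coeff_mem_of_analyticOnNhd_of_isPreconnected {f : 𝕜 → E} {U : Set 𝕜}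
    (hf : AnalyticOnNhd 𝕜 f U) (hUo : IsOpen U) (hU : IsPreconnected U) {x y : 𝕜} (hx : x ∈ U)
    (hy : y ∈ U) {p q : FormalMultilinearSeries 𝕜 𝕜 E} (hp : HasFPowerSeriesAt f p x)
    (hq : HasFPowerSeriesAt f q y) {M : Submodule 𝕜 E} (hM : IsClosed (M : Set E))
    (hpM : ∀ n, p.coeff n ∈ M) (n : ℕ) : q.coeff n ∈ M := by
  have : IsClosed (M.toAddSubgroup : Set E) := hM
  have hcoeff (r : FormalMultilinearSeries 𝕜 𝕜 E) (n : ℕ) :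
      (M.mkQL.compFormalMultilinearSeries r).coeff n = 0 ↔ r.coeff n ∈ M :=
    Submodule.Quotient.mk_eq_zero M
  have hquot : AnalyticOnNhd 𝕜 (M.mkQL ∘ f) U := M.mkQL.comp_analyticOnNhd hf
  have hmk {r : FormalMultilinearSeries 𝕜 𝕜 E} {z : 𝕜} (hr : HasFPowerSeriesAt f r z) :
      HasFPowerSeriesAt (M.mkQL ∘ f) (M.mkQL.compFormalMultilinearSeries r) z :=
    hr.elim fun _ h => (M.mkQL.comp_hasFPowerSeriesOnBall h).hasFPowerSeriesAt
  have hnear : M.mkQL ∘ f =ᶠ[𝓝 x] 0 := by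
    filter_upwards [hasFPowerSeriesAt_iff'.1 (hmk hp)] with z hz
    simp only [(hcoeff p _).2 (hpM _), smul_zero] at hz
    exact hz.unique hasSum_zero
  have hzero : M.mkQL ∘ f =ᶠ[𝓝 y] 0 :=
    (hquot.eqOn_zero_of_preconnected_of_eventuallyEq_zero hU hx hnear).eventuallyEq_of_mem
      (hUo.mem_nhds hy)
  rw [← hcoeff, (hmk hq).eq_zero_of_eventually hzero]
  rfl

lemma coeff_mkPiRing (c : ℕ → E) (n : ℕ) :
    FormalMultilinearSeries.coeff
      (fun n => ContinuousMultilinearMap.mkPiRing 𝕜 (Fin n) (c n)) n = c n := by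
  simp [FormalMultilinearSeries.coeff]

variable {A : Type*} [NormedRing A] [NormedAlgebra 𝕜 A] [HasSummableGeomSeries A]

lemma hasFPowerSeriesAt_inverse_one_sub_smul {a : A} {μ : 𝕜} (hμ : IsUnit (1 - μ • a)) :
    HasFPowerSeriesAt (fun z : 𝕜 => Ring.inverse (1 - z • a))
      (fun n => ContinuousMultilinearMap.mkPiRing 𝕜 (Fin n)
        ((Ring.inverse (1 - μ • a) * a) ^ n * Ring.inverse (1 - μ • a))) μ := by
  set r := Ring.inverse (1 - μ • a)
  have hfactor (h : 𝕜) : 1 - (μ + h) • a = (1 - μ • a) * (1 - h • (r * a)) := by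
    rw [mul_sub, mul_one, mul_smul_comm, Ring.mul_inverse_cancel_left _ _ hμ, add_smul, sub_sub]
  have hcomm (h : 𝕜) : Commute (1 - μ • a) (1 - h • (r * a)) := by
    have ha : Commute (1 - μ • a) a := (Commute.one_left a).sub_left ((Commute.refl a).smul_left μ)
    have hr : Commute (1 - μ • a) r := commute_ringInverse_right (Commute.refl _)
    exact (Commute.one_right _).sub_right ((hr.mul_right ha).smul_right h)
  have hgeom := hasFPowerSeriesAt_iff.1
    (spectrum.hasFPowerSeriesOnBall_inverse_one_sub_smul 𝕜 (r * a)).hasFPowerSeriesAt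
  refine hasFPowerSeriesAt_iff.2 (hgeom.mono fun h hh => ?_)
  rw [hfactor, Ring.mul_inverse_rev' (hcomm h)]
  simpa only [coeff_mkPiRing, smul_mul_assoc, zero_add] using hh.mul_right r

lemma ringInverse_mul_pow_apply_mem_maxGenEigenspace {S A : E →L[𝕜] E} (hSA : S * A = 1) {e : E}
    (he : S e = 0) {μ : 𝕜} (hμ : IsUnit (1 - μ • A)) (n : ℕ) :
    ((Ring.inverse (1 - μ • A) * A) ^ n * Ring.inverse (1 - μ • A)) e ∈
      Module.End.maxGenEigenspace (S : Module.End 𝕜 E) μ := by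
  set R := Ring.inverse (1 - μ • A)
  have hSμ : S - μ • 1 = S * (1 - μ • A) := by
    rw [mul_sub, mul_one, mul_smul_comm, hSA]
  have hleft : (S - μ • 1) * (R * A) = 1 := by
    rw [hSμ, mul_assoc, Ring.mul_inverse_cancel_left _ _ hμ, hSA]
  have hker : (S - μ • 1) (R e) = 0 := by
    rw [← mul_apply_eq_comp, hSμ, mul_assoc, Ring.mul_inverse_cancel _ hμ, mul_one, he]
  refine (Module.End.mem_maxGenEigenspace _ _ _).2 ⟨n + 1, ?_⟩
  rw [mul_apply_eq_comp, ← ContinuousLinearMap.coe_coe ((R * A) ^ n),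
    ContinuousLinearMap.toLinearMap_pow]
  exact pow_succ_apply_pow_apply_eq_zero (L := (S : Module.End 𝕜 E) - μ • 1)
    (congrArg ContinuousLinearMap.toLinearMapRingHom hleft) hker n

variable [CompleteSpace E]

theorem topologicalClosure_maxGenEigenspace_eq_top {S A : E →L[𝕜] E} (hSA : S * A = 1) {e : E}
    (he : S e = 0)
    (hcyclic : (Submodule.span 𝕜 (Set.range fun n => (A ^ n) e)).topologicalClosure = ⊤)
    {U : Set 𝕜} (hUo : IsOpen U) (hU : IsPreconnected U) (hU0 : 0 ∈ U)
    (hunit : ∀ z ∈ U, IsUnit (1 - z • A)) {μ : 𝕜} (hμ : μ ∈ U) :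
    (Module.End.maxGenEigenspace (S : Module.End 𝕜 E) μ).topologicalClosure = ⊤ := by
  set M := (Module.End.maxGenEigenspace (S : Module.End 𝕜 E) μ).topologicalClosure
  have hM : IsClosed (M : Set E) := Submodule.isClosed_topologicalClosure _
  set eval : (E →L[𝕜] E) →L[𝕜] E := ContinuousLinearMap.apply 𝕜 E e
  have hanalytic : AnalyticOnNhd 𝕜 (fun z : 𝕜 => Ring.inverse (1 - z • A)) U := fun z hz =>
    (hasFPowerSeriesAt_inverse_one_sub_smul (hunit z hz)).analyticAt
  have hcoeff0 (n : ℕ) : (A ^ n) e ∈ M := by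
    have := coeff_mem_of_analyticOnNhd_of_isPreconnected hanalytic hUo hU hμ hU0
      (hasFPowerSeriesAt_inverse_one_sub_smul (hunit μ hμ))
      (hasFPowerSeriesAt_inverse_one_sub_smul (hunit 0 hU0)) (M := M.comap eval.toLinearMap)
      (hM.preimage eval.continuous)
      (fun n => by
        rw [coeff_mkPiRing]
        exact Submodule.le_topologicalClosure _
          (ringInverse_mul_pow_apply_mem_maxGenEigenspace hSA he (hunit μ hμ) n)) n
    rw [coeff_mkPiRing, zero_smul, sub_zero, Ring.inverse_one, one_mul, mul_one] at this
    exact this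
  rw [eq_top_iff, ← hcyclic]
  refine Submodule.topologicalClosure_minimal _ (Submodule.span_le.2 ?_) hM
  rintro _ ⟨n, rfl⟩
  exact hcoeff0 n

end Analytic

section BlaschkeCalculus

variable {R : Type*} [Ring R] [Algebra ℂ R]

/-- The Möbius factor `mobius z₀` evaluated at an element `a` of a complex algebra; meaningful when
`1 - conj z₀ • a` is invertible, since `Ring.inverse` is `0` at non-units. -/
def moebiusAt (z₀ : ℂ) (a : R) : R :=
  (z₀ • 1 - a) * Ring.inverse (1 - conj z₀ • a)

/-- The Blaschke product with zeros `zs` evaluated at an element `a` of a complex algebra. -/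
def blaschkeAt {m : ℕ} (zs : Fin m → ℂ) (a : R) : R :=
  (List.ofFn fun j => moebiusAt (zs j) a).prod

lemma blaschkeAt_succ {m : ℕ} (zs : Fin (m + 1) → ℂ) (a : R) :
    blaschkeAt zs a = moebiusAt (zs 0) a * blaschkeAt (fun j => zs j.succ) a := by
  rw [blaschkeAt, List.ofFn_succ, List.prod_cons, blaschkeAt]

lemma commute_moebiusAt_right {a b : R} (h : Commute b a) (z₀ : ℂ) :
    Commute b (moebiusAt z₀ a) :=
  (((Commute.one_right b).smul_right z₀).sub_right h).mul_right
    (commute_ringInverse_right ((Commute.one_right b).sub_right (h.smul_right _)))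

lemma commute_blaschkeAt_right {a b : R} (h : Commute b a) {m : ℕ} (zs : Fin m → ℂ) :
    Commute b (blaschkeAt zs a) := by
  refine Commute.list_prod_right _ _ fun x hx => ?_
  obtain ⟨j, rfl⟩ := List.mem_ofFn.1 hx
  exact commute_moebiusAt_right h (zs j)

lemma moebiusAt_conj_mul_moebiusAt {s a : R} (hsa : s * a = 1) {z₀ : ℂ}
    (hs : IsUnit (1 - z₀ • s)) (ha : IsUnit (1 - conj z₀ • a)) :
    moebiusAt (conj z₀) s * moebiusAt z₀ a = 1 := by
  have hsub_a : z₀ • 1 - a = -((1 - z₀ • s) * a) := by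
    rw [sub_mul, one_mul, smul_mul_assoc, hsa, neg_sub]
  have hsub_s : (conj z₀ • 1 - s) * a = -(1 - conj z₀ • a) := by
    rw [sub_mul, smul_mul_assoc, one_mul, hsa, neg_sub]
  calc moebiusAt (conj z₀) s * moebiusAt z₀ a
      = -((conj z₀ • 1 - s) * (Ring.inverse (1 - z₀ • s) * ((1 - z₀ • s) * a)) *
          Ring.inverse (1 - conj z₀ • a)) := by
        rw [moebiusAt, moebiusAt, conj_conj, hsub_a]
        simp only [mul_neg, neg_mul, mul_assoc]
    _ = 1 := by
        rw [Ring.inverse_mul_cancel_left _ _ hs, hsub_s, neg_mul, neg_neg,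
          Ring.mul_inverse_cancel _ ha]

lemma blaschkeAt_conj_mul_blaschkeAt {s a : R} (hsa : s * a = 1) {m : ℕ} {zs : Fin m → ℂ}
    (hs : ∀ j, IsUnit (1 - zs j • s)) (ha : ∀ j, IsUnit (1 - conj (zs j) • a)) :
    blaschkeAt (fun j => conj (zs j)) s * blaschkeAt zs a = 1 := by
  induction m with
  | zero => simp only [blaschkeAt, List.ofFn_zero, List.prod_nil, mul_one]
  | succ m ih =>
    have hcomm : Commute (moebiusAt (conj (zs 0)) s) (blaschkeAt (fun j => conj (zs j.succ)) s) :=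
      commute_blaschkeAt_right (commute_moebiusAt_right (Commute.refl s) _).symm _
    rw [blaschkeAt_succ, blaschkeAt_succ, hcomm.eq, mul_assoc, ← mul_assoc (moebiusAt _ s),
      moebiusAt_conj_mul_moebiusAt hsa (hs 0) (ha 0), one_mul]
    exact ih (fun j => hs j.succ) fun j => ha j.succ

lemma exists_commute_blaschkeAt_eq_mul_sub {m : ℕ} (zs : Fin m → ℂ) (a : R) (j : Fin m) :
    ∃ b, Commute b a ∧ blaschkeAt zs a = b * (a - zs j • 1) := by
  induction m with
  | zero => exact j.elim0
  | succ m ih =>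
    have hhead : Commute a (moebiusAt (zs 0) a) := commute_moebiusAt_right (Commute.refl a) _
    rw [blaschkeAt_succ]
    induction j using Fin.cases with
    | zero =>
      have htail : Commute a (blaschkeAt (fun j => zs j.succ) a) :=
        commute_blaschkeAt_right (Commute.refl a) _
      have hinv : Commute a (Ring.inverse (1 - conj (zs 0) • a)) :=
        commute_ringInverse_right ((Commute.one_right a).sub_right ((Commute.refl a).smul_right _))
      have hb := hinv.mul_right htail
      refine ⟨-(Ring.inverse (1 - conj (zs 0) • a) * blaschkeAt (fun j => zs j.succ) a),
        hb.symm.neg_left, ?_⟩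
      rw [moebiusAt, ← neg_sub a, neg_mul, neg_mul, neg_mul, mul_assoc,
        (hb.sub_left ((Commute.one_left _).smul_left (zs 0))).eq]
    | succ j =>
      obtain ⟨b, hb, hfactor⟩ := ih (fun j => zs j.succ) j
      exact ⟨moebiusAt (zs 0) a * b, hhead.symm.mul_left hb, by rw [hfactor, mul_assoc]⟩

lemma maxGenEigenspace_le_iSup_ker_pow_blaschkeAt {E : Type*} [NormedAddCommGroup E]
    [NormedSpace ℂ E] {m : ℕ} (zs : Fin m → ℂ) (S : E →L[ℂ] E) (j : Fin m) :
    Module.End.maxGenEigenspace (S : Module.End ℂ E) (zs j) ≤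
      ⨆ n, LinearMap.ker (((blaschkeAt zs S : E →L[ℂ] E) : Module.End ℂ E) ^ n) := by
  intro x hx
  obtain ⟨n, hn⟩ := (Module.End.mem_maxGenEigenspace _ _ _).1 hx
  obtain ⟨b, hb, hfactor⟩ := exists_commute_blaschkeAt_eq_mul_sub zs S j
  have hpow : blaschkeAt zs S ^ n = b ^ n * (S - zs j • 1) ^ n := by
    rw [hfactor, (hb.sub_right ((Commute.one_right b).smul_right (zs j))).mul_pow]
  refine Submodule.mem_iSup_of_mem n (LinearMap.mem_ker.2 ?_)
  rw [← ContinuousLinearMap.toLinearMap_pow, hpow, ContinuousLinearMap.coe_coe, mul_apply_eq_comp,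
    ← ContinuousLinearMap.coe_coe ((S - zs j • 1) ^ n), ContinuousLinearMap.toLinearMap_pow]
  exact (congrArg _ hn).trans (map_zero _)

end BlaschkeCalculus

section NormedRing

lemma isUnit_one_sub_of_norm_pow_lt_one {A : Type*} [NormedRing A] [HasSummableGeomSeries A] {a : A}
    {n : ℕ} (ha : ‖a ^ n‖ < 1) : IsUnit (1 - a) := by
  have hcomm : Commute (1 - a) (∑ i ∈ Finset.range n, a ^ i) :=
    (Commute.one_left _).sub_left
      (Commute.sum_right _ _ _ fun i _ => (Commute.refl a).pow_right i)
  have hunit := (Units.oneSub _ ha).isUnit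
  rw [Units.val_oneSub, ← mul_neg_geom_sum] at hunit
  exact (hcomm.isUnit_mul_iff.1 hunit).1

end NormedRing

section WeightedShift

lemma norm_sq_eq_tsum_norm_sq (a : H2) : ‖a‖ ^ 2 = ∑' k, ‖a k‖ ^ 2 := by
  simpa using lp.norm_rpow_eq_tsum (p := 2) (by norm_num) a

lemma summable_norm_sq (a : H2) : Summable fun k => ‖a k‖ ^ 2 := by
  simpa using (lp.memℓp a).summable (by norm_num)

lemma norm_le_mul_norm_of_norm_succ_le {a b : H2} {C : ℝ} (hC : 0 ≤ C) (h0 : b 0 = 0)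
    (hsucc : ∀ k, ‖b (k + 1)‖ ≤ C * ‖a k‖) : ‖b‖ ≤ C * ‖a‖ := by
  refine (sq_le_sq₀ (norm_nonneg _) (by positivity)).1 ?_
  calc ‖b‖ ^ 2 = ∑' k, ‖b (k + 1)‖ ^ 2 := by
        rw [norm_sq_eq_tsum_norm_sq, (summable_norm_sq b).tsum_eq_zero_add, h0]
        simp
    _ ≤ ∑' k, C ^ 2 * ‖a k‖ ^ 2 :=
        ((summable_nat_add_iff 1).2 (summable_norm_sq b)).tsum_le_tsum
          (fun k => by rw [← mul_pow]; gcongr; exact hsucc k) ((summable_norm_sq a).mul_left _)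
    _ = (C * ‖a‖) ^ 2 := by rw [tsum_mul_left, ← norm_sq_eq_tsum_norm_sq, mul_pow]

lemma memℓp_weightedShift {v : ℕ → ℂ} (hv : BddAbove (Set.range fun k => ‖v k‖)) (a : H2) :
    Memℓp (fun k => Nat.casesOn k 0 fun k => v k * a k : ℕ → ℂ) 2 := by
  obtain ⟨C, hC⟩ := hv
  refine memℓp_gen ((summable_nat_add_iff 1).1 ?_)
  refine ((summable_norm_sq a).mul_left (C ^ 2)).of_nonneg_of_le (fun k => by positivity)
    fun k => ?_
  have := hC ⟨k, rfl⟩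
  simp only [ENNReal.toReal_ofNat, Real.rpow_ofNat, norm_mul, mul_pow] at this ⊢
  gcongr

/-- The forward weighted shift `e_k ↦ v k • e_{k+1}` on `H2`, for a bounded weight sequence `v`. -/
def weightedShift (v : ℕ → ℂ) (hv : BddAbove (Set.range fun k => ‖v k‖)) : H2 →L[ℂ] H2 :=
  LinearMap.mkContinuousOfExistsBound
    { toFun := fun a => ⟨_, memℓp_weightedShift hv a⟩
      map_add' := fun a b => by
        ext (_ | k)
        exacts [(add_zero (0 : ℂ)).symm, mul_add _ _ _]
      map_smul' := fun c a => by
        ext (_ | k)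
        exacts [(mul_zero c).symm, mul_left_comm _ _ _] }
    (by
      obtain ⟨C, hC⟩ := hv
      have hC' (k : ℕ) : ‖v k‖ ≤ C := hC ⟨k, rfl⟩
      refine ⟨C, fun a => norm_le_mul_norm_of_norm_succ_le ((norm_nonneg _).trans (hC' 0)) rfl
        fun k => (norm_mul _ _).le.trans ?_⟩
      gcongr
      exact hC' k)

variable {v : ℕ → ℂ} (hv : BddAbove (Set.range fun k => ‖v k‖))

@[simp]
lemma weightedShift_apply_zero (a : H2) : weightedShift v hv a 0 = 0 := rfl

@[simp]
lemma weightedShift_apply_succ (a : H2) (k : ℕ) : weightedShift v hv a (k + 1) = v k * a k := rfl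

lemma weightedShift_pow_apply_of_lt {n k : ℕ} (hk : k < n) (a : H2) :
    (weightedShift v hv ^ n) a k = 0 := by
  induction n generalizing k with
  | zero => exact absurd hk (Nat.not_lt_zero k)
  | succ n ih =>
    rw [pow_succ', mul_apply_eq_comp]
    cases k with
    | zero => rfl
    | succ k => rw [weightedShift_apply_succ, ih (Nat.lt_of_succ_lt_succ hk), mul_zero]

lemma norm_weightedShift_pow_add_le {r : ℝ} (hr : 0 ≤ r) {K : ℕ} (hK : ∀ k ≥ K, ‖v k‖ ≤ r)
    (n : ℕ) : ‖weightedShift v hv ^ (n + K)‖ ≤ r ^ n * ‖weightedShift v hv ^ K‖ := by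
  induction n with
  | zero => simp
  | succ n ih =>
    refine ContinuousLinearMap.opNorm_le_bound _ (by positivity) fun a => ?_
    have hstep :
        ‖(weightedShift v hv ^ (n + 1 + K)) a‖ ≤ r * ‖(weightedShift v hv ^ (n + K)) a‖ := by
      rw [Nat.add_right_comm, pow_succ', mul_apply_eq_comp]
      refine norm_le_mul_norm_of_norm_succ_le hr rfl fun k => ?_
      rw [weightedShift_apply_succ, norm_mul]
      rcases lt_or_ge k (n + K) with hk | hk
      · rw [weightedShift_pow_apply_of_lt hv hk, norm_zero, mul_zero, mul_zero]
      · gcongr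
        exact hK k (le_of_add_le_right hk)
    calc _ ≤ r * ((r ^ n * ‖weightedShift v hv ^ K‖) * ‖a‖) := by
          exact hstep.trans (by gcongr; exact ContinuousLinearMap.le_of_opNorm_le _ ih a)
      _ = r ^ (n + 1) * ‖weightedShift v hv ^ K‖ * ‖a‖ := by ring

lemma isUnit_one_sub_smul_weightedShift {ρ : ℝ} (hρ : Tendsto (fun k => ‖v k‖) atTop (𝓝 ρ)) {z : ℂ}
    (hz : ‖z‖ * ρ < 1) : IsUnit (1 - z • weightedShift v hv) := by
  obtain ⟨r, hzr, hρr⟩ : ∃ r, ‖z‖ * r < 1 ∧ ρ < r :=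
    ((((continuous_const_mul ‖z‖).tendsto ρ).mono_left (nhdsWithin_le_nhds (s := Set.Ioi ρ))
      |>.eventually_lt_const hz).and self_mem_nhdsWithin).exists
  have hρ0 : 0 ≤ ρ := ge_of_tendsto' hρ fun k => norm_nonneg _
  obtain ⟨K, hK⟩ := eventually_atTop.1 (hρ.eventually_le_const hρr)
  have hr : 0 ≤ r := hρ0.trans hρr.le
  have hdecay :
      Tendsto (fun n => ‖z‖ ^ K * ‖weightedShift v hv ^ K‖ * (‖z‖ * r) ^ n) atTop (𝓝 0) := by
    simpa using (tendsto_pow_atTop_nhds_zero_of_lt_one (by positivity) hzr).const_mul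
      (‖z‖ ^ K * ‖weightedShift v hv ^ K‖)
  obtain ⟨n, hn⟩ := (hdecay.eventually_lt_const one_pos).exists
  refine isUnit_one_sub_of_norm_pow_lt_one (n := n + K) (lt_of_le_of_lt ?_ hn)
  calc ‖(z • weightedShift v hv) ^ (n + K)‖ = ‖z‖ ^ (n + K) * ‖weightedShift v hv ^ (n + K)‖ := by
        rw [smul_pow, norm_smul, norm_pow]
    _ ≤ ‖z‖ ^ (n + K) * (r ^ n * ‖weightedShift v hv ^ K‖) := by
        gcongr
        exact norm_weightedShift_pow_add_le hv hr hK n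
    _ = ‖z‖ ^ K * ‖weightedShift v hv ^ K‖ * (‖z‖ * r) ^ n := by ring

lemma weightedShift_single (n : ℕ) :
    weightedShift v hv (lp.single 2 n 1) = v n • (lp.single 2 (n + 1) 1 : H2) := by
  ext (_ | k)
  · simp
  · by_cases h : k = n
    · simp [h]
    · simp [h]

lemma star_weightedShift_apply (a : H2) (k : ℕ) :
    star (weightedShift v hv) a k = conj (v k) * a (k + 1) := by
  have h := ContinuousLinearMap.adjoint_inner_right (weightedShift v hv) (lp.single 2 k 1) a
  rw [weightedShift_single, inner_smul_left, lp.inner_single_left, lp.inner_single_left] at h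
  simpa [ContinuousLinearMap.star_eq_adjoint] using h

lemma star_weightedShift_single_zero (c : ℂ) : star (weightedShift v hv) (lp.single 2 0 c) = 0 := by
  ext k
  rw [star_weightedShift_apply, lp.single_apply_ne _ _ _ k.succ_ne_zero, mul_zero]
  rfl

lemma star_weightedShift_mul_weightedShift {u : ℕ → ℂ}
    (hu : BddAbove (Set.range fun k => ‖u k‖)) (huv : ∀ k, conj (u k) * v k = 1) :
    star (weightedShift u hu) * weightedShift v hv = 1 := by
  ext a k
  rw [mul_apply_eq_comp, star_weightedShift_apply, weightedShift_apply_succ, ← mul_assoc, huv,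
    one_mul, one_apply_eq_self]

lemma isUnit_one_sub_smul_star_weightedShift {ρ : ℝ} (hρ : Tendsto (fun k => ‖v k‖) atTop (𝓝 ρ))
    {z : ℂ} (hz : ‖z‖ * ρ < 1) : IsUnit (1 - z • star (weightedShift v hv)) := by
  have hunit := (isUnit_one_sub_smul_weightedShift hv hρ (z := conj z)
    (by rwa [RCLike.norm_conj])).star
  rwa [star_sub, star_one, star_smul, Complex.star_def, Complex.conj_conj] at hunit

lemma weightedShift_pow_single_zero (n : ℕ) :
    (weightedShift v hv ^ n) (lp.single 2 0 1) =
      (∏ i ∈ Finset.range n, v i) • (lp.single 2 n 1 : H2) := by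
  induction n with
  | zero => simp
  | succ n ih =>
    rw [pow_succ', mul_apply_eq_comp, ih, map_smul, weightedShift_single, smul_smul,
      Finset.prod_range_succ]

lemma topologicalClosure_span_weightedShift_pow_single_eq_top (hv0 : ∀ k, v k ≠ 0) :
    (Submodule.span ℂ (Set.range fun n =>
      (weightedShift v hv ^ n) (lp.single 2 0 1))).topologicalClosure = ⊤ := by
  set W := Submodule.span ℂ (Set.range fun n => (weightedShift v hv ^ n) (lp.single 2 0 1))
  have hsingle (n : ℕ) (c : ℂ) : (lp.single 2 n c : H2) ∈ W := by
    have hmem := W.smul_mem (c * (∏ i ∈ Finset.range n, v i)⁻¹)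
      (Submodule.subset_span (Set.mem_range_self n))
    rwa [weightedShift_pow_single_zero, smul_smul,
      inv_mul_cancel_right₀ (Finset.prod_ne_zero_iff.2 fun i _ => hv0 i), ← lp.single_smul,
      smul_eq_mul, mul_one] at hmem
  refine eq_top_iff.2 fun a _ => ?_
  exact W.isClosed_topologicalClosure.mem_of_tendsto (lp.hasSum_single (by norm_num) a)
    (Eventually.of_forall fun s => W.le_topologicalClosure (W.sum_mem fun k _ => hsingle k _))

end WeightedShift

section RepFun

lemma betaSeq_succ (w : ℕ → ℝ) (k : ℕ) : betaSeq w (k + 1) = betaSeq w k * w (k + 1) :=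
  Finset.prod_Icc_succ_top (Nat.le_add_left 1 k) w

lemma betaSeq_pos {w : ℕ → ℝ} (hpos : ∀ k, 1 ≤ k → 0 < w k) (k : ℕ) : 0 < betaSeq w k :=
  Finset.prod_pos fun j hj => hpos j (Finset.mem_Icc.1 hj).1

lemma mem_unitDisk {z : ℂ} : z ∈ unitDisk ↔ ‖z‖ < 1 := mem_ball_zero_iff

lemma conj_mem_unitDisk {z : ℂ} (hz : z ∈ unitDisk) : conj z ∈ unitDisk := by
  rwa [mem_unitDisk, RCLike.norm_conj, ← mem_unitDisk]

/-- Every vector of `H2` represents, with respect to the weights `β`, a power series that converges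
on the unit disk; without this `repFun` takes the junk value `0`. -/
def RepSummable (β : ℕ → ℝ) : Prop :=
  ∀ a : H2, ∀ z ∈ unitDisk, Summable fun k => (a k / (β k : ℂ)) * z ^ k

lemma repSummable_betaSeq {w : ℕ → ℝ} (hpos : ∀ k, 1 ≤ k → 0 < w k)
    (hlim : Tendsto w atTop (𝓝 1)) : RepSummable (betaSeq w) := by
  intro a z hz
  obtain ⟨r, hzr, hr⟩ := exists_between (mem_unitDisk.1 hz)
  have hratio : ∀ᶠ k in atTop, ‖z‖ / w (k + 1) < r := by
    refine Tendsto.eventually_lt_const hzr ?_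
    simpa only [div_one, Pi.div_def] using
      tendsto_const_nhds.div ((tendsto_add_atTop_iff_nat 1).2 hlim) one_ne_zero
  have hgeom : Summable fun k => ((betaSeq w k : ℂ))⁻¹ * z ^ k := by
    refine summable_of_ratio_norm_eventually_le hr (hratio.mono fun k hk => ?_)
    calc ‖((betaSeq w (k + 1) : ℂ))⁻¹ * z ^ (k + 1)‖
        = ‖z‖ / w (k + 1) * ‖((betaSeq w k : ℂ))⁻¹ * z ^ k‖ := by
          rw [betaSeq_succ, norm_mul, norm_mul, norm_inv, norm_inv, norm_pow, norm_pow,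
            Complex.ofReal_mul, norm_mul, Complex.norm_of_nonneg (hpos _ k.succ_pos).le]
          ring
      _ ≤ r * ‖((betaSeq w k : ℂ))⁻¹ * z ^ k‖ := by gcongr
  refine (hgeom.norm.mul_left ‖a‖).of_norm_bounded fun k => ?_
  rw [div_eq_mul_inv, mul_assoc, norm_mul]
  gcongr
  exact lp.norm_apply_le_norm (by norm_num) a k

variable {β : ℕ → ℝ}

lemma repFun_sub (hβ : RepSummable β) (a b : H2) {z : ℂ} (hz : z ∈ unitDisk) :
    repFun β (a - b) z = repFun β a z - repFun β b z := by
  rw [repFun, repFun, repFun, ← (hβ a z hz).tsum_sub (hβ b z hz)]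
  exact tsum_congr fun k => by rw [lp.coeFn_sub, Pi.sub_apply]; ring

lemma repFun_smul (β : ℕ → ℝ) (c : ℂ) (a : H2) (z : ℂ) :
    repFun β (c • a) z = c * repFun β a z := by
  rw [repFun, repFun, ← tsum_mul_left]
  exact tsum_congr fun k => by rw [lp.coeFn_smul, Pi.smul_apply, smul_eq_mul]; ring

lemma repFun_zero_right (β : ℕ → ℝ) (a : H2) : repFun β a 0 = a 0 / β 0 := by
  rw [repFun, tsum_eq_single 0 fun k hk => by rw [zero_pow hk, mul_zero], pow_zero, mul_one]

lemma repFun_single_zero (β : ℕ → ℝ) (c z : ℂ) : repFun β (lp.single 2 0 c) z = c / β 0 := by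
  rw [repFun, tsum_eq_single 0 fun k hk => by rw [lp.single_apply_ne _ _ _ hk, zero_div, zero_mul],
    lp.single_apply_self, pow_zero, mul_one]

lemma hasFPowerSeriesAt_repFun (hβ : RepSummable β) (a : H2) :
    HasFPowerSeriesAt (repFun β a) (.ofScalars ℂ fun k => a k / (β k : ℂ)) 0 := by
  refine hasFPowerSeriesAt_iff.2 ?_
  filter_upwards [Metric.ball_mem_nhds (0 : ℂ) one_pos] with z hz
  have hsum : HasSum (fun k => a k / (β k : ℂ) * z ^ k) (repFun β a z) := (hβ a z hz).hasSum
  simpa only [FormalMultilinearSeries.coeff_ofScalars, smul_eq_mul, zero_add, mul_comm (z ^ _)]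
    using hsum

lemma eq_of_repFun_eqOn (hβ : RepSummable β) (hβ0 : ∀ k, β k ≠ 0) {a b : H2}
    (h : Set.EqOn (repFun β a) (repFun β b) unitDisk) : a = b := by
  have hseries := (hasFPowerSeriesAt_repFun hβ a).eq_formalMultilinearSeries_of_eventually
    (hasFPowerSeriesAt_repFun hβ b) (h.eventuallyEq_of_mem (Metric.ball_mem_nhds 0 one_pos))
  ext k
  have hcoeff := congrFun (FormalMultilinearSeries.ofScalars_series_injective ℂ ℂ hseries) k
  exact (div_left_inj' (Complex.ofReal_ne_zero.2 (hβ0 k))).1 hcoeff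

end RepFun

section RepMul

variable {β : ℕ → ℝ} {g h : ℂ → ℂ} {T T' : H2 →L[ℂ] H2}

lemma repMul_const_smul_one (β : ℕ → ℝ) (c : ℂ) : RepMul β (fun _ => c) (c • 1) :=
  fun a z _ => repFun_smul β c a z

lemma RepMul.mul (hT : RepMul β g T) (hT' : RepMul β h T') : RepMul β (g * h) (T * T') :=
  fun a z hz => by rw [mul_apply_eq_comp, hT _ z hz, hT' _ z hz, Pi.mul_apply, mul_assoc]

lemma RepMul.pow (hT : RepMul β g T) (n : ℕ) : RepMul β (g ^ n) (T ^ n) := by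
  induction n with
  | zero => simpa only [pow_zero, one_smul, Pi.one_def] using repMul_const_smul_one β 1
  | succ n ih => simpa only [pow_succ] using ih.mul hT

lemma RepMul.sub (hβ : RepSummable β) (hT : RepMul β g T) (hT' : RepMul β h T') :
    RepMul β (g - h) (T - T') := fun a z hz => by
  rw [sub_apply, repFun_sub hβ _ _ hz, hT a z hz, hT' a z hz, Pi.sub_apply, sub_mul]

lemma RepMul.ringInverse (hT : RepMul β g T) (hunit : IsUnit T) (hg : ∀ z ∈ unitDisk, g z ≠ 0) :
    RepMul β g⁻¹ (Ring.inverse T) := fun a z hz => by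
  have hcancel : T (Ring.inverse T a) = a := by
    rw [← mul_apply_eq_comp, Ring.mul_inverse_cancel _ hunit, one_apply_eq_self]
  rw [Pi.inv_apply, eq_inv_mul_iff_mul_eq₀ (hg z hz), ← hT _ z hz, hcancel]

lemma one_sub_conj_mul_ne_zero {z₀ z : ℂ} (hz₀ : z₀ ∈ unitDisk) (hz : z ∈ unitDisk) :
    1 - conj z₀ * z ≠ 0 := by
  refine fun h => (?_ : ‖conj z₀ * z‖ < 1).ne (by rw [← sub_eq_zero.1 h, norm_one])
  rw [norm_mul, RCLike.norm_conj]
  exact mul_lt_one_of_nonneg_of_lt_one_left (norm_nonneg _) (mem_unitDisk.1 hz₀)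
    (mem_unitDisk.1 hz).le

lemma RepMul.moebiusAt (hβ : RepSummable β) (hT : RepMul β id T) {z₀ : ℂ} (hz₀ : z₀ ∈ unitDisk)
    (hunit : IsUnit (1 - conj z₀ • T)) : RepMul β (mobius z₀) (moebiusAt z₀ T) := by
  have hnum : RepMul β ((fun _ => z₀) - id) (z₀ • 1 - T) := (repMul_const_smul_one β z₀).sub hβ hT
  have hden : RepMul β ((fun _ => 1) - (fun _ => conj z₀) * id) (1 - conj z₀ • T) := by
    simpa using (repMul_const_smul_one β 1).sub hβ ((repMul_const_smul_one β (conj z₀)).mul hT)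
  exact hnum.mul (hden.ringInverse hunit fun z hz => one_sub_conj_mul_ne_zero hz₀ hz)

lemma RepMul.blaschkeAt (hβ : RepSummable β) (hT : RepMul β id T) {m : ℕ} {zs : Fin m → ℂ}
    (hzs : ∀ j, zs j ∈ unitDisk) (hunit : ∀ j, IsUnit (1 - conj (zs j) • T)) :
    RepMul β (fun z => ∏ j, mobius (zs j) z) (blaschkeAt zs T) := by
  induction m with
  | zero =>
    simpa only [one_smul, Finset.univ_eq_empty, Finset.prod_empty, _root_.blaschkeAt,
      List.ofFn_zero, List.prod_nil] using repMul_const_smul_one β 1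
  | succ m ih =>
    simp only [Fin.prod_univ_succ, blaschkeAt_succ]
    exact (hT.moebiusAt hβ (hzs 0) (hunit 0)).mul (ih (fun j => hzs j.succ) fun j => hunit j.succ)

variable {w : ℕ → ℝ} {S : H2 →L[ℂ] H2}

lemma repMul_weightedShift (hβ : RepSummable (betaSeq w)) (hw : ∀ k, w (k + 1) ≠ 0)
    (hv : BddAbove (Set.range fun k => ‖(w (k + 1) : ℂ)‖)) :
    RepMul (betaSeq w) id (weightedShift (fun k => (w (k + 1) : ℂ)) hv) := by
  intro a z hz
  rw [repFun, (hβ _ z hz).tsum_eq_zero_add, weightedShift_apply_zero, zero_div, zero_mul, zero_add,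
    repFun, ← tsum_mul_left]
  refine tsum_congr fun k => ?_
  have := Complex.ofReal_ne_zero.2 (hw k)
  rw [weightedShift_apply_succ, betaSeq_succ, mul_comm (betaSeq w k), Complex.ofReal_mul,
    mul_div_mul_left _ _ this, pow_succ, id]
  ring

lemma RepS.weightedShift_apply (hS : RepS (betaSeq w) S) (hβ : RepSummable (betaSeq w))
    (hw : ∀ k, 1 ≤ k → 0 < w k) (hv : BddAbove (Set.range fun k => ‖(w (k + 1) : ℂ)‖)) (a : H2) :
    weightedShift (fun k => (w (k + 1) : ℂ)) hv (S a) = a - lp.single 2 0 (a 0) := by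
  refine eq_of_repFun_eqOn hβ (fun k => (betaSeq_pos hw k).ne') fun z hz => ?_
  rw [repMul_weightedShift hβ (fun k => (hw _ k.succ_pos).ne') hv _ z hz, repFun_sub hβ _ _ hz,
    repFun_single_zero, ← repFun_zero_right, id]
  rcases eq_or_ne z 0 with rfl | hz0
  · rw [zero_mul, sub_self]
  · rw [hS a z hz hz0, mul_div_cancel₀ _ hz0]

lemma RepS.eq_star_weightedShift (hS : RepS (betaSeq w) S) (hβ : RepSummable (betaSeq w))
    (hw : ∀ k, 1 ≤ k → 0 < w k) (hv : BddAbove (Set.range fun k => ‖(w (k + 1) : ℂ)‖))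
    (hv' : BddAbove (Set.range fun k => ‖(w (k + 1) : ℂ)⁻¹‖)) :
    S = star (weightedShift (fun k => (w (k + 1) : ℂ)⁻¹) hv') := by
  ext a k
  have hcoord := congrArg (fun b : H2 => b (k + 1)) (hS.weightedShift_apply hβ hw hv a)
  have hwk : (w (k + 1) : ℂ) ≠ 0 := Complex.ofReal_ne_zero.2 (hw _ k.succ_pos).ne'
  rw [star_weightedShift_apply, map_inv₀, Complex.conj_ofReal, eq_inv_mul_iff_mul_eq₀ hwk]
  simpa using hcoord

lemma blaschkeBarOp_eq_blaschkeAt {m : ℕ} (zs : Fin m → ℂ) (S : H2 →L[ℂ] H2) :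
    blaschkeBarOp zs S = blaschkeAt (fun j => conj (zs j)) S := by
  simp only [blaschkeBarOp, blaschkeAt, moebiusAt, Complex.conj_conj]

end RepMul

section Totality

variable {E : Type*} [NormedAddCommGroup E] [NormedSpace ℂ E] [CompleteSpace E]

theorem topologicalClosure_span_blaschkeAt_pow_apply_eq_top {S A : E →L[ℂ] E} (hSA : S * A = 1)
    {e : E} (he : S e = 0)
    (hcyclic : (Submodule.span ℂ (Set.range fun n => (A ^ n) e)).topologicalClosure = ⊤)
    (hS : ∀ z ∈ unitDisk, IsUnit (1 - z • S)) (hA : ∀ z ∈ unitDisk, IsUnit (1 - z • A))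
    {m : ℕ} (hm : 0 < m) {zs : Fin m → ℂ} (hzs : ∀ j, zs j ∈ unitDisk) {ι : Type*} {f : ι → E}
    (hf : LinearMap.ker ((blaschkeAt (fun j => conj (zs j)) S : E →L[ℂ] E) : E →ₗ[ℂ] E) ≤
      Submodule.span ℂ (Set.range f)) :
    (Submodule.span ℂ (Set.range fun p : ι × ℕ =>
      (blaschkeAt zs A ^ p.2) (f p.1))).topologicalClosure = ⊤ := by
  have hLT := congrArg ContinuousLinearMap.toLinearMapRingHom <|
    blaschkeAt_conj_mul_blaschkeAt hSA (fun j => hS _ (hzs j))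
      fun j => hA _ (conj_mem_unitDisk (hzs j))
  have hdense := topologicalClosure_maxGenEigenspace_eq_top hSA he hcyclic Metric.isOpen_ball
    (convex_ball 0 1).isPreconnected (Metric.mem_ball_self one_pos) hA
    (conj_mem_unitDisk (hzs ⟨0, hm⟩))
  have hspan := (maxGenEigenspace_le_iSup_ker_pow_blaschkeAt (fun j => conj (zs j)) S
    ⟨0, hm⟩).trans (iSup_le (ker_pow_le_span_pow_apply hLT hf))
  refine eq_top_mono (Submodule.topologicalClosure_mono (hspan.trans_eq ?_)) hdense
  simp only [← ContinuousLinearMap.toLinearMap_pow, ContinuousLinearMap.coe_coe]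

end Totality

section Model

variable {w : ℕ → ℝ}

lemma tendsto_norm_weight_succ (hlim : Tendsto w atTop (𝓝 1)) :
    Tendsto (fun k => ‖(w (k + 1) : ℂ)‖) atTop (𝓝 1) := by
  simpa using ((tendsto_add_atTop_iff_nat 1).2 hlim).ofReal.norm

theorem exists_repMul_id_of_repS (hpos : ∀ k, 1 ≤ k → 0 < w k) (hlim : Tendsto w atTop (𝓝 1))
    {S : H2 →L[ℂ] H2} (hS : RepS (betaSeq w) S) :
    ∃ A : H2 →L[ℂ] H2, RepMul (betaSeq w) id A ∧ S * A = 1 ∧ S (lp.single 2 0 1) = 0 ∧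
      (Submodule.span ℂ (Set.range fun n =>
        (A ^ n) (lp.single 2 0 1))).topologicalClosure = ⊤ ∧
      (∀ z ∈ unitDisk, IsUnit (1 - z • S)) ∧ ∀ z ∈ unitDisk, IsUnit (1 - z • A) := by
  have hw (k : ℕ) : w (k + 1) ≠ 0 := (hpos _ k.succ_pos).ne'
  have hw' (k : ℕ) : (w (k + 1) : ℂ) ≠ 0 := Complex.ofReal_ne_zero.2 (hw k)
  have hβ := repSummable_betaSeq hpos hlim
  have hv := tendsto_norm_weight_succ hlim
  have hv' : Tendsto (fun k => ‖(w (k + 1) : ℂ)⁻¹‖) atTop (𝓝 1) := by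
    simpa only [norm_inv, inv_one] using hv.inv₀ one_ne_zero
  obtain rfl := hS.eq_star_weightedShift hβ hpos hv.bddAbove_range hv'.bddAbove_range
  refine ⟨weightedShift _ hv.bddAbove_range, repMul_weightedShift hβ hw _,
    star_weightedShift_mul_weightedShift _ _ fun k => ?_, star_weightedShift_single_zero _ 1,
    topologicalClosure_span_weightedShift_pow_single_eq_top _ hw', fun z hz => ?_, fun z hz => ?_⟩
  · rw [map_inv₀, Complex.conj_ofReal, inv_mul_cancel₀ (hw' k)]
  · exact isUnit_one_sub_smul_star_weightedShift _ hv' (by rwa [mul_one, ← mem_unitDisk])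
  · exact isUnit_one_sub_smul_weightedShift _ hv (by rwa [mul_one, ← mem_unitDisk])

end Model

/-- Let `H²_β` come from a weight sequence `w_k → 1`, let
`B(z) = ∏_{j=1}^m (z_j - z)/(1 - conj z_j · z)` be a Blaschke product of order `m`,
and let `{f_1, …, f_m}` be a basis of `Ker B̄(S)`.  Then the family
`{f_j · B^n : 1 ≤ j ≤ m, n ≥ 0}` is total and finitely linearly independent in `H²_β`. -/
theorem statement7 (w : ℕ → ℝ) (hpos : ∀ k, 1 ≤ k → 0 < w k)
    (hlim : Tendsto w atTop (nhds 1)) (m : ℕ) (hm : 0 < m)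
    (zs : Fin m → ℂ) (hzs : ∀ j, zs j ∈ unitDisk)
    (B : ℂ → ℂ) (hB : ∀ z, B z = ∏ j, mobius (zs j) z)
    (S : H2 →L[ℂ] H2) (hS : RepS (betaSeq w) S)
    (f : Fin m → H2)
    (hker : Submodule.span ℂ (Set.range f) = LinearMap.ker (blaschkeBarOp zs S : H2 →ₗ[ℂ] H2))
    (hind : LinearIndependent ℂ f) :
    ∃ c : Fin m × ℕ → H2,
      (∀ (j : Fin m) (n : ℕ), ∀ z ∈ unitDisk,
        repFun (betaSeq w) (c (j, n)) z = repFun (betaSeq w) (f j) z * B z ^ n) ∧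
      (Submodule.span ℂ (Set.range c)).topologicalClosure = ⊤ ∧
      LinearIndependent ℂ c := by
  obtain ⟨A, hA, hSA, he, hcyclic, hSunit, hAunit⟩ := exists_repMul_id_of_repS hpos hlim hS
  have hβ := repSummable_betaSeq hpos hlim
  have hAunit' (j : Fin m) := hAunit _ (conj_mem_unitDisk (hzs j))
  rw [blaschkeBarOp_eq_blaschkeAt] at hker
  refine ⟨fun p => (blaschkeAt zs A ^ p.2) (f p.1), fun j n z hz => ?_, ?_, ?_⟩
  · have hpow := ((hA.blaschkeAt hβ hzs hAunit').pow n) (f j) z hz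
    rwa [Pi.pow_apply, ← hB, mul_comm] at hpow
  · exact topologicalClosure_span_blaschkeAt_pow_apply_eq_top hSA he hcyclic hSunit hAunit hm hzs
      hker.ge
  · have hLT := congrArg ContinuousLinearMap.toLinearMapRingHom <|
      blaschkeAt_conj_mul_blaschkeAt hSA (fun j => hSunit _ (hzs j)) hAunit'
    have hf (j : Fin m) := LinearMap.mem_ker.1 (hker.le (Submodule.subset_span ⟨j, rfl⟩))
    simpa only [← ContinuousLinearMap.toLinearMap_pow, ContinuousLinearMap.coe_coe] using
      linearIndependent_pow_apply_of_mul_eq_one hLT hf hind
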